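/- arXiv:1707.01968 — 2 statements merged into one kernel-verified Lean document; each statement's English description precedes it below -/
import Mathlib

section
/- Let μ ∈ ℝ and κ ∈ ℕ with κ²π² > μ. Then for every integer 𝖬 ≥ κ, the series Σ_{i=𝖬+1}^∞ 1/((iπ)² − μ) converges and Σ_{i=𝖬+1}^∞ 1/((iπ)² − μ) ≤ (κ+1)² / ((1+2κ)·π²·𝖬). (In particular, for every integer i ≥ κ+1 one has (iπ)² − μ ≥ ((2κ+1)/(κ+1)²)·(iπ)² > 0.) -/
/-!
For `i ≥ κ + 1` one has `μ < κ²π² ≤ (κ/(κ+1))² (iπ)²`, so `(iπ)² - μ` is at least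
`(1 - κ²/(κ+1)²) (iπ)² = ((2κ+1)/(κ+1)²) (iπ)²`. Each term of the series is therefore at most
`C / i²` with `C = (κ+1)²/((1+2κ)π²)`, and `1/i² ≤ 1/(i-1) - 1/i` telescopes to give `C / M`.
-/

open Real

theorem spectral_gap (μ : ℝ) (κ : ℕ) (hκ : μ < (κ : ℝ) ^ 2 * π ^ 2) (i : ℕ) (hi : κ + 1 ≤ i) :
    ((2 * (κ : ℝ) + 1) / ((κ : ℝ) + 1) ^ 2) * ((i : ℝ) * π) ^ 2 ≤ ((i : ℝ) * π) ^ 2 - μ ∧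
      0 < ((2 * (κ : ℝ) + 1) / ((κ : ℝ) + 1) ^ 2) * ((i : ℝ) * π) ^ 2 := by
  have hi' : (κ : ℝ) + 1 ≤ i := by exact_mod_cast hi
  have hk : (0 : ℝ) ≤ κ := Nat.cast_nonneg κ
  have hi0 : (0 : ℝ) < i := by linarith
  have hπ := Real.pi_pos
  refine ⟨?_, by positivity⟩
  have h1 : (κ : ℝ) ≤ κ / (κ + 1) * i := by
    rw [div_mul_eq_mul_div, le_div_iff₀ (by positivity)]
    exact mul_le_mul_of_nonneg_left hi' hk
  have h2 : (κ : ℝ) ^ 2 * π ^ 2 ≤ (κ / (κ + 1) * i) ^ 2 * π ^ 2 := by gcongr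
  have h3 : ((2 * (κ : ℝ) + 1) / ((κ : ℝ) + 1) ^ 2) * ((i : ℝ) * π) ^ 2
      = ((i : ℝ) * π) ^ 2 - (κ / (κ + 1) * i) ^ 2 * π ^ 2 := by
    field_simp
    ring
  linarith

/-- Comparison of a term of the series with a telescoping difference. -/
theorem term_le_telescope (μ : ℝ) (κ : ℕ) (hκ : μ < (κ : ℝ) ^ 2 * π ^ 2)
    (m : ℕ) (hm : κ ≤ m) (hm1 : 1 ≤ m) :
    1 / ((((m + 1 : ℕ) : ℝ) * π) ^ 2 - μ) ≤
      ((κ : ℝ) + 1) ^ 2 / ((1 + 2 * (κ : ℝ)) * π ^ 2) * (1 / (m : ℝ) - 1 / ((m + 1 : ℕ) : ℝ)) := by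
  obtain ⟨h1, h0⟩ := spectral_gap μ κ hκ (m + 1) (by omega)
  have hm0 : (0 : ℝ) < m := by exact_mod_cast hm1
  have hπ := Real.pi_pos
  refine (one_div_le_one_div_of_le h0 h1).trans ?_
  have e : 1 / (((2 * (κ : ℝ) + 1) / ((κ : ℝ) + 1) ^ 2) * (((m + 1 : ℕ) : ℝ) * π) ^ 2)
      = ((κ : ℝ) + 1) ^ 2 / ((1 + 2 * (κ : ℝ)) * π ^ 2) * (1 / ((m : ℝ) + 1) ^ 2) := by
    push_cast
    rw [add_comm (1 : ℝ) (2 * κ)]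
    field_simp
  rw [e]
  refine mul_le_mul_of_nonneg_left ?_ (by positivity)
  have e2 : 1 / (m : ℝ) - 1 / ((m + 1 : ℕ) : ℝ) = 1 / ((m : ℝ) * (m + 1)) := by
    push_cast
    field_simp
    ring
  rw [e2]
  exact one_div_le_one_div_of_le (by positivity) (by nlinarith)

/-- **spectral tail estimate.**
Let `μ ∈ ℝ` and `κ ∈ ℕ`, `κ ≥ 1`, with `κ²π² > μ`.  Then for every integer `𝖬 ≥ κ`
the series `∑_{i=𝖬+1}^∞ 1/((iπ)² − μ)` converges, its sum is at most
`(κ+1)²/((1+2κ)·π²·𝖬)`, and for every integer `i ≥ κ+1` one has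
`(iπ)² − μ ≥ ((2κ+1)/(κ+1)²)·(iπ)² > 0`. -/
theorem stmt2 (μ : ℝ) (κ : ℕ) (hκ1 : 1 ≤ κ) (hκ : μ < (κ : ℝ) ^ 2 * π ^ 2)
    (M : ℕ) (hM : κ ≤ M) :
    Summable (fun j : ℕ => 1 / ((((M + 1 + j : ℕ) : ℝ) * π) ^ 2 - μ)) ∧
    (∑' j : ℕ, 1 / ((((M + 1 + j : ℕ) : ℝ) * π) ^ 2 - μ)) ≤
      ((κ : ℝ) + 1) ^ 2 / ((1 + 2 * (κ : ℝ)) * π ^ 2 * M) ∧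
    ∀ i : ℕ, κ + 1 ≤ i →
      ((2 * (κ : ℝ) + 1) / ((κ : ℝ) + 1) ^ 2) * ((i : ℝ) * π) ^ 2 ≤ ((i : ℝ) * π) ^ 2 - μ ∧
      0 < ((2 * (κ : ℝ) + 1) / ((κ : ℝ) + 1) ^ 2) * ((i : ℝ) * π) ^ 2 := by
  have hM1 : 1 ≤ M := hκ1.trans hM
  have hπ := Real.pi_pos
  have hnn : ∀ j : ℕ, 0 ≤ 1 / ((((M + 1 + j : ℕ) : ℝ) * π) ^ 2 - μ) := fun j => by
    obtain ⟨h1, h0⟩ := spectral_gap μ κ hκ (M + 1 + j) (by omega)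
    exact one_div_nonneg.2 (h0.le.trans h1)
  have hsum : ∀ n : ℕ, ∑ j ∈ Finset.range n, 1 / ((((M + 1 + j : ℕ) : ℝ) * π) ^ 2 - μ) ≤
      ((κ : ℝ) + 1) ^ 2 / ((1 + 2 * (κ : ℝ)) * π ^ 2 * M) := fun n => by
    calc ∑ j ∈ Finset.range n, 1 / ((((M + 1 + j : ℕ) : ℝ) * π) ^ 2 - μ)
        ≤ ∑ j ∈ Finset.range n, ((κ : ℝ) + 1) ^ 2 / ((1 + 2 * (κ : ℝ)) * π ^ 2) *
            (1 / ((M + j : ℕ) : ℝ) - 1 / ((M + (j + 1) : ℕ) : ℝ)) := by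
          refine Finset.sum_le_sum fun j _ => ?_
          have h := term_le_telescope μ κ hκ (M + j) (by omega) (by omega)
          rwa [show M + 1 + j = M + j + 1 by omega]
      _ = ((κ : ℝ) + 1) ^ 2 / ((1 + 2 * (κ : ℝ)) * π ^ 2) *
            (1 / ((M + 0 : ℕ) : ℝ) - 1 / ((M + n : ℕ) : ℝ)) := by
          rw [← Finset.mul_sum, Finset.sum_range_sub' (fun j : ℕ => 1 / ((M + j : ℕ) : ℝ))]
      _ ≤ ((κ : ℝ) + 1) ^ 2 / ((1 + 2 * (κ : ℝ)) * π ^ 2) * (1 / (M : ℝ)) := by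
          refine mul_le_mul_of_nonneg_left ?_ (by positivity)
          have : (0 : ℝ) ≤ 1 / ((M + n : ℕ) : ℝ) := by positivity
          rw [Nat.add_zero]
          linarith
      _ = _ := by rw [div_mul_div_comm, mul_one]
  exact ⟨summable_of_sum_range_le hnn hsum, Real.tsum_le_of_sum_range_le hnn hsum,
    fun i hi => spectral_gap μ κ hκ i hi⟩
end

section
/- Let T > 0, μ ∈ ℝ, M ∈ ℕ with M ≥ 1 and Δτ := T/M. For every a > 0 define the sequence (q^m(a))_{m=0}^M by q^0(a) = 1, (1 + Δτ a²)·q^1(a) = 1, and (1 + Δτ a²)·q^m(a) = (1 + Δτ μ a)·q^{m−1}(a) for m = 2,…,M. Then for every a > 0 and every m ∈ {0,1,…,M}, |q^m(a)| ≤ e^{μ²T/2}. -/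
open Real

/-!
Each step with `m ≥ 2` multiplies `q` by `r = (1 + Δτ μ a) / (1 + Δτ a²)`. By Cauchy–Schwarz
`(1 + Δτ μ a)² ≤ (1 + μ² Δτ)(1 + Δτ a²)`, hence `r² ≤ 1 + μ² Δτ ≤ e^{μ² Δτ}` with no
restriction on `Δτ` (`abs_factor_le`). Induction gives `|q^m| ≤ e^{m μ² Δτ / 2}`
(`abs_qIMEX_le`), and `m Δτ ≤ T` for `m ≤ M`.
-/

/-- The modified IMEX time-stepping sequence `q^m(a)`, determined by
`q^0(a) = 1`, `(1 + Δτ a²)·q^1(a) = 1`, and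
`(1 + Δτ a²)·q^m(a) = (1 + Δτ μ a)·q^{m−1}(a)` for `m ≥ 2`. -/
noncomputable def qIMEX (Δτ μ a : ℝ) : ℕ → ℝ
  | 0 => 1
  | 1 => 1 / (1 + Δτ * a ^ 2)
  | (m + 2) => ((1 + Δτ * μ * a) / (1 + Δτ * a ^ 2)) * qIMEX Δτ μ a (m + 1)

lemma one_step_sq_le {d : ℝ} (hd : 0 ≤ d) (μ a : ℝ) :
    (1 + d * μ * a) ^ 2 ≤ (1 + μ ^ 2 * d) * (1 + d * a ^ 2) ^ 2 := by
  have cauchy_schwarz : (1 + d * μ * a) ^ 2 ≤ (1 + μ ^ 2 * d) * (1 + d * a ^ 2) := by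
    nlinarith [mul_nonneg hd (sq_nonneg (μ - a))]
  have one_le : 1 ≤ 1 + d * a ^ 2 := le_add_of_nonneg_right (by positivity)
  exact cauchy_schwarz.trans
    (mul_le_mul_of_nonneg_left (le_self_pow₀ one_le two_ne_zero) (by positivity))

/-- Bound on the amplification factor of one step, valid for every step size `d ≥ 0`. -/
lemma abs_factor_le {d : ℝ} (hd : 0 ≤ d) (μ a : ℝ) :
    |(1 + d * μ * a) / (1 + d * a ^ 2)| ≤ Real.exp (μ ^ 2 * d / 2) := by
  have hpos : 0 < 1 + d * a ^ 2 := by positivity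
  refine abs_le_of_sq_le_sq ?_ (Real.exp_pos _).le
  have hexp : Real.exp (μ ^ 2 * d / 2) ^ 2 = Real.exp (μ ^ 2 * d) := by
    rw [← Real.exp_nat_mul]
    congr 1
    push_cast
    ring
  rw [hexp, div_pow]
  calc (1 + d * μ * a) ^ 2 / (1 + d * a ^ 2) ^ 2 ≤ 1 + μ ^ 2 * d :=
        (div_le_iff₀ (by positivity)).2 (one_step_sq_le hd μ a)
    _ ≤ Real.exp (μ ^ 2 * d) := by linarith [Real.add_one_le_exp (μ ^ 2 * d)]

lemma abs_qIMEX_le {d : ℝ} (hd : 0 ≤ d) (μ a : ℝ) :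
    ∀ m : ℕ, |qIMEX d μ a m| ≤ Real.exp (m * (μ ^ 2 * d / 2))
  | 0 => by simp [qIMEX]
  | 1 => by
    have one_le : 1 ≤ 1 + d * a ^ 2 := le_add_of_nonneg_right (by positivity)
    rw [qIMEX, abs_of_nonneg (by positivity)]
    exact ((div_le_one (by positivity)).2 one_le).trans (Real.one_le_exp (by positivity))
  | m + 2 => by
    rw [qIMEX, abs_mul]
    calc _ ≤ Real.exp (μ ^ 2 * d / 2) * Real.exp ((m + 1 : ℕ) * (μ ^ 2 * d / 2)) :=
          mul_le_mul (abs_factor_le hd μ a) (abs_qIMEX_le hd μ a (m + 1)) (abs_nonneg _)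
            (Real.exp_pos _).le
      _ = Real.exp ((m + 2 : ℕ) * (μ ^ 2 * d / 2)) := by
          rw [← Real.exp_add]
          congr 1
          push_cast
          ring

/-- **unconditional stability of the modified IMEX scheme.**
For `T > 0`, `μ ∈ ℝ`, `M ≥ 1`, `Δτ = T/M`, every `a > 0` and every `m ∈ {0,…,M}`,
`|q^m(a)| ≤ e^{μ²T/2}`. -/
theorem stmt11 (T μ : ℝ) (hT : 0 < T) (M : ℕ) (hM : 1 ≤ M) (a : ℝ) (ha : 0 < a)
    (m : ℕ) (hm : m ≤ M) :
    |qIMEX (T / M) μ a m| ≤ Real.exp (μ ^ 2 * T / 2) := by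
  have hM' : (0 : ℝ) < M := by exact_mod_cast hM
  have hm' : (m : ℝ) ≤ M := by exact_mod_cast hm
  refine (abs_qIMEX_le (div_nonneg hT.le hM'.le) μ a m).trans (Real.exp_le_exp.2 ?_)
  calc (m : ℝ) * (μ ^ 2 * (T / M) / 2) ≤ M * (μ ^ 2 * (T / M) / 2) :=
        mul_le_mul_of_nonneg_right hm' (by positivity)
    _ = μ ^ 2 * T / 2 := by field_simp
end
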